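/- (Young-type characterization, matching the paper's Axioms 1 and 2.) Let N be a finite set of n features. Suppose ψ assigns to every game v : 𝒫(N) → ℝ with v(∅) = 0 a vector (ψ_a(v))_{a ∈ N} satisfying: (i) transferability/efficiency, ∑_{a ∈ N} ψ_a(v) = v(N); (ii) symmetry, if v(S ∪ {a}) = v(S ∪ {b}) for all S ⊆ N \ {a,b} then ψ_a(v) = ψ_b(v); and (iii) strong monotonicity, for all games v₁, v₂ and all a ∈ N, if v₁(S ∪ {a}) − v₁(S) ≥ v₂(S ∪ {a}) − v₂(S) for every S ⊆ N \ {a}, then ψ_a(v₁) ≥ ψ_a(v₂). Then ψ is the Shapley feature value: ψ_a(v) = ∑_{S ⊆ N \ {a}} (|S|!(n−|S|−1)!/n!)(v(S ∪ {a}) − v(S)) for every game v and every a ∈ N. -/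

import Mathlib

/-!
For a feature `a`, the game `S ↦ v S - v (S \ {a})` gives `a` the same marginal contributions as
`v`, but every coalition without `a` is worthless in it. So if the members of `A` are veto players
of `v` and `a ∉ A`, then by marginality the payoff of `a` is its payoff in a game whose veto players
include `A ∪ {a}`, and it is determined by downward induction on `A`. The veto players themselves
are pairwise symmetric, so they share equally what efficiency leaves to them.

The Shapley value is efficient because the total marginal contribution telescopes: the coefficient
of `v R` in the sum of all payoffs is `1 / n.choose |R|` from the members of `R` joining
`R \ {a}`, minus `1 / n.choose |R|` from the features outside `R` joining `R`; the first term is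
missing only for `R = ∅`, the second only for `R = N`.
-/

open Finset

/-- The Shapley feature value of feature `a` in the game `v` over `N`. -/
noncomputable def shapleyFeatureValue {ι : Type*} [DecidableEq ι]
    (N : Finset ι) (v : Finset ι → ℝ) (a : ι) : ℝ :=
  ∑ S ∈ (N.erase a).powerset,
    ((Nat.factorial S.card * Nat.factorial (N.card - S.card - 1) : ℝ) /
        (Nat.factorial N.card : ℝ)) * (v (insert a S) - v S)

section DoubleCounting

variable {ι M : Type*} [DecidableEq ι] [AddCommMonoid M]

lemma sum_sum_powerset_erase (N : Finset ι) (f : Finset ι → M) :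
    ∑ a ∈ N, ∑ S ∈ (N.erase a).powerset, f S = ∑ S ∈ N.powerset, #(N \ S) • f S := by
  rw [sum_comm' (t' := N.powerset) (s' := fun S => N \ S)]
  · simp only [sum_const]
  · intro a S
    simp only [mem_powerset, mem_sdiff, subset_erase]
    tauto

lemma sum_powerset_erase_insert {N : Finset ι} {a : ι} (ha : a ∈ N) (f : Finset ι → M) :
    ∑ S ∈ (N.erase a).powerset, f (insert a S) = ∑ R ∈ N.powerset with a ∈ R, f R := by
  refine sum_nbij' (insert a) (erase · a) ?_ ?_ ?_ ?_ fun _ _ => rfl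
  · intro S hS
    have hSN : S ⊆ N := (mem_powerset.1 hS).trans (erase_subset a N)
    simp [insert_subset ha hSN]
  · intro R hR
    exact mem_powerset.2 (erase_subset_erase a (mem_powerset.1 (mem_filter.1 hR).1))
  · intro S hS
    exact erase_insert (subset_erase.1 (mem_powerset.1 hS)).2
  · intro R hR
    exact insert_erase (mem_filter.1 hR).2

lemma sum_sum_powerset_erase_insert (N : Finset ι) (f : Finset ι → M) :
    ∑ a ∈ N, ∑ S ∈ (N.erase a).powerset, f (insert a S) = ∑ R ∈ N.powerset, #R • f R := by
  rw [sum_congr rfl fun a ha => sum_powerset_erase_insert ha f,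
    sum_comm' (t' := N.powerset) (s' := id)]
  · simp only [id, sum_const]
  · intro a R
    simp only [mem_powerset, mem_filter, id]
    exact ⟨fun h => ⟨h.2.2, h.2.1⟩, fun h => ⟨h.2 h.1, h.2, h.1⟩⟩

end DoubleCounting

/-- The weight, in the Shapley value for `n` features, of the marginal contribution of a feature to
a coalition of size `k`; meaningful for `k < n`. -/
noncomputable def shapleyWeight (n k : ℕ) : ℝ :=
  (k.factorial * (n - k - 1).factorial : ℝ) / n.factorial

lemma succ_mul_shapleyWeight {n k : ℕ} (hk : k < n) :
    (k + 1 : ℝ) * shapleyWeight n k = (n.choose (k + 1) : ℝ)⁻¹ := by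
  rw [Nat.cast_choose ℝ hk, inv_div, shapleyWeight, Nat.factorial_succ, Nat.sub_sub]
  push_cast
  ring

lemma sub_mul_shapleyWeight {n k : ℕ} (hk : k < n) :
    ((n - k : ℕ) : ℝ) * shapleyWeight n k = (n.choose k : ℝ)⁻¹ := by
  have hfac : ((n - k : ℕ) : ℝ) * (n - k - 1).factorial = (n - k).factorial :=
    mod_cast Nat.mul_factorial_pred (Nat.sub_ne_zero_of_lt hk)
  rw [Nat.cast_choose ℝ hk.le, inv_div, shapleyWeight, ← hfac]
  ring

section Shapley

variable {ι : Type*} [DecidableEq ι]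

lemma sum_sum_shapleyWeight_mul_insert (N : Finset ι) (v : Finset ι → ℝ) :
    ∑ a ∈ N, ∑ S ∈ (N.erase a).powerset, shapleyWeight #N #S * v (insert a S) =
      ∑ R ∈ N.powerset, ((#N).choose #R : ℝ)⁻¹ * v R - v ∅ := by
  have hcard : ∀ a ∈ N, ∀ S ∈ (N.erase a).powerset,
      shapleyWeight #N #S * v (insert a S) =
        shapleyWeight #N (#(insert a S) - 1) * v (insert a S) := by
    intro a _ S hS
    rw [card_insert_of_notMem (subset_erase.1 (mem_powerset.1 hS)).2, Nat.add_sub_cancel]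
  rw [sum_congr rfl fun a ha => sum_congr rfl (hcard a ha),
    sum_sum_powerset_erase_insert N fun R => shapleyWeight #N (#R - 1) * v R,
    ← sum_erase (a := ∅) N.powerset (by simp)]
  trans ∑ R ∈ N.powerset.erase ∅, ((#N).choose #R : ℝ)⁻¹ * v R
  · refine sum_congr rfl fun R hR => ?_
    obtain ⟨hR₀, hRN⟩ := mem_erase.1 hR
    obtain ⟨k, hk⟩ := Nat.exists_eq_succ_of_ne_zero (card_ne_zero.2 (nonempty_iff_ne_empty.2 hR₀))
    have hkN : k < #N := by
      have := card_le_card (mem_powerset.1 hRN)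
      omega
    rw [hk, Nat.succ_sub_one, nsmul_eq_mul, ← mul_assoc, Nat.cast_succ,
      succ_mul_shapleyWeight hkN]
  · simp [sum_erase_eq_sub (empty_mem_powerset N)]

lemma sum_sum_shapleyWeight_mul (N : Finset ι) (v : Finset ι → ℝ) :
    ∑ a ∈ N, ∑ S ∈ (N.erase a).powerset, shapleyWeight #N #S * v S =
      ∑ R ∈ N.powerset, ((#N).choose #R : ℝ)⁻¹ * v R - v N := by
  rw [sum_sum_powerset_erase N fun S => shapleyWeight #N #S * v S,
    ← sum_erase (a := N) N.powerset (by simp)]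
  trans ∑ R ∈ N.powerset.erase N, ((#N).choose #R : ℝ)⁻¹ * v R
  · refine sum_congr rfl fun R hR => ?_
    have hRN : R ⊂ N := mem_ssubsets.1 hR
    rw [card_sdiff_of_subset hRN.subset, nsmul_eq_mul, ← mul_assoc,
      sub_mul_shapleyWeight (card_lt_card hRN)]
  · simp [sum_erase_eq_sub (mem_powerset_self N)]

theorem sum_shapleyFeatureValue (N : Finset ι) (v : Finset ι → ℝ) :
    ∑ a ∈ N, shapleyFeatureValue N v a = v N - v ∅ := calc
  _ = ∑ a ∈ N, ∑ S ∈ (N.erase a).powerset, shapleyWeight #N #S * v (insert a S) -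
      ∑ a ∈ N, ∑ S ∈ (N.erase a).powerset, shapleyWeight #N #S * v S := by
    simp only [shapleyFeatureValue, shapleyWeight, mul_sub, sum_sub_distrib]
  _ = v N - v ∅ := by
    rw [sum_sum_shapleyWeight_mul_insert, sum_sum_shapleyWeight_mul, sub_sub_sub_cancel_left]

lemma shapleyFeatureValue_congr {N : Finset ι} {v₁ v₂ : Finset ι → ℝ} {a : ι}
    (h : ∀ S ⊆ N.erase a, v₁ (insert a S) - v₁ S = v₂ (insert a S) - v₂ S) :
    shapleyFeatureValue N v₁ a = shapleyFeatureValue N v₂ a :=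
  sum_congr rfl fun S hS => by rw [h S (mem_powerset.1 hS)]

lemma shapleyFeatureValue_eq_of_symmetric {N : Finset ι} {v : Finset ι → ℝ} {a b : ι}
    (ha : a ∈ N) (hb : b ∈ N)
    (h : ∀ S ⊆ (N.erase a).erase b, v (insert a S) = v (insert b S)) :
    shapleyFeatureValue N v a = shapleyFeatureValue N v b := by
  rcases eq_or_ne a b with rfl | hab
  · rfl
  set K := (N.erase a).erase b with hK
  have haK : a ∉ K := by simp [hK]
  have hbK : b ∉ K := notMem_erase _ _
  have hNa : N.erase a = insert b K := (insert_erase (mem_erase.2 ⟨hab.symm, hb⟩)).symm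
  have hNb : N.erase b = insert a K := by
    rw [hK, erase_right_comm, insert_erase (mem_erase.2 ⟨hab, ha⟩)]
  simp only [shapleyFeatureValue]
  rw [hNa, hNb, sum_powerset_insert hbK, sum_powerset_insert haK,
    ← sum_add_distrib, ← sum_add_distrib]
  refine sum_congr rfl fun S hS => ?_
  have hSK := mem_powerset.1 hS
  rw [card_insert_of_notMem fun hbS => hbK (hSK hbS),
    card_insert_of_notMem fun haS => haK (hSK haS), h S hSK, insert_comm a b S]

end Shapley

lemma eq_of_sum_eq_sum_of_const {ι M : Type*} [DecidableEq ι] [AddCancelCommMonoid M]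
    [IsAddTorsionFree M] {A N : Finset ι} {a : ι} {f g : ι → M} (hAN : A ⊆ N)
    (hsum : ∑ b ∈ N, f b = ∑ b ∈ N, g b) (hfg : ∀ b ∈ N \ A, f b = g b)
    (ha : a ∈ A) (hf : ∀ b ∈ A, f b = f a) (hg : ∀ b ∈ A, g b = g a) : f a = g a := by
  rw [← sum_sdiff hAN, ← sum_sdiff hAN, sum_congr rfl hfg, add_right_inj,
    sum_eq_card_nsmul hf, sum_eq_card_nsmul hg] at hsum
  exact nsmul_right_injective (card_ne_zero_of_mem ha) hsum

/-- Young's axioms for a value `ψ` on the games over `N`: efficiency, symmetry, and marginality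
(the payoff of a feature depends only on its marginal contributions). A game is a set function on
all of `Finset ι` vanishing at `∅`; its worths, like the payoffs, lie in a group `G`. -/
structure IsYoungValue {ι G : Type*} [DecidableEq ι] [AddCommGroup G]
    (N : Finset ι) (ψ : (Finset ι → G) → ι → G) : Prop where
  efficient : ∀ v : Finset ι → G, v ∅ = 0 → ∑ a ∈ N, ψ v a = v N
  symmetric : ∀ v : Finset ι → G, v ∅ = 0 → ∀ a ∈ N, ∀ b ∈ N,
    (∀ S ⊆ (N.erase a).erase b, v (insert a S) = v (insert b S)) → ψ v a = ψ v b
  marginal : ∀ v₁ v₂ : Finset ι → G, v₁ ∅ = 0 → v₂ ∅ = 0 → ∀ a ∈ N,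
    (∀ S ⊆ N.erase a, v₁ (insert a S) - v₁ S = v₂ (insert a S) - v₂ S) → ψ v₁ a = ψ v₂ a

theorem isYoungValue_shapleyFeatureValue {ι : Type*} [DecidableEq ι] (N : Finset ι) :
    IsYoungValue N (shapleyFeatureValue N) where
  efficient v hv := by rw [sum_shapleyFeatureValue, hv, sub_zero]
  symmetric _ _ _ ha _ hb h := shapleyFeatureValue_eq_of_symmetric ha hb h
  marginal _ _ _ _ _ _ h := shapleyFeatureValue_congr h

/-- The members of `A` are veto players of the game `v`: a coalition lacking one of them is
worthless. -/
def IsVetoSet {ι G : Type*} [Zero G] (v : Finset ι → G) (A : Finset ι) : Prop :=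
  ∀ S, ¬ A ⊆ S → v S = 0

/-- The game in which `a` has the same marginal contributions as in `v`, and is a veto player. -/
def marginalGame {ι G : Type*} [DecidableEq ι] [Sub G] (v : Finset ι → G) (a : ι) :
    Finset ι → G :=
  fun S => v S - v (S.erase a)

section Uniqueness

variable {ι G : Type*} [DecidableEq ι] [AddCommGroup G] {v : Finset ι → G} {A N S : Finset ι}
  {a b : ι}

lemma marginalGame_empty (v : Finset ι → G) (a : ι) : marginalGame v a ∅ = 0 := by
  simp [marginalGame]

lemma marginalGame_insert_sub (v : Finset ι → G) (haS : a ∉ S) :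
    marginalGame v a (insert a S) - marginalGame v a S = v (insert a S) - v S := by
  simp [marginalGame, erase_insert haS, erase_eq_of_notMem haS]

lemma IsVetoSet.insert_marginalGame (hA : IsVetoSet v A) (a : ι) :
    IsVetoSet (marginalGame v a) (insert a A) := by
  intro S hS
  by_cases haS : a ∈ S
  · have hAS : ¬ A ⊆ S := fun h => hS (insert_subset haS h)
    have hAS' : ¬ A ⊆ S.erase a := fun h => hAS (h.trans (erase_subset a S))
    rw [marginalGame, hA S hAS, hA _ hAS', sub_zero]
  · rw [marginalGame, erase_eq_of_notMem haS, sub_self]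

lemma IsVetoSet.insert_eq_insert (hA : IsVetoSet v A) (ha : a ∈ A) (hb : b ∈ A)
    (haS : a ∉ S) (hbS : b ∉ S) : v (insert a S) = v (insert b S) := by
  rcases eq_or_ne a b with rfl | hab
  · rfl
  rw [hA (insert a S) fun h => by simpa [hab.symm, hbS] using h hb,
    hA (insert b S) fun h => by simpa [hab, haS] using h ha]

namespace IsYoungValue

variable {ψ φ : (Finset ι → G) → ι → G}

lemma apply_marginalGame (hψ : IsYoungValue N ψ) (hv : v ∅ = 0) (ha : a ∈ N) :
    ψ (marginalGame v a) a = ψ v a :=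
  hψ.marginal _ _ (marginalGame_empty v a) hv a ha fun _ hS =>
    marginalGame_insert_sub v (subset_erase.1 hS).2

lemma eq_of_isVetoSet (hψ : IsYoungValue N ψ) (hv : v ∅ = 0) (hA : IsVetoSet v A) (hAN : A ⊆ N)
    (ha : a ∈ A) (hb : b ∈ A) : ψ v a = ψ v b := by
  refine hψ.symmetric v hv a (hAN ha) b (hAN hb) fun S hS => hA.insert_eq_insert ha hb ?_ ?_
  · exact fun haS => by simpa using hS haS
  · exact fun hbS => by simpa using hS hbS

lemma unique_of_isVetoSet [IsAddTorsionFree G] (hψ : IsYoungValue N ψ) (hφ : IsYoungValue N φ)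
    (hv : v ∅ = 0) (hA : IsVetoSet v A) (hAN : A ⊆ N) (ha : a ∈ N) : ψ v a = φ v a := by
  induction hB : N \ A using Finset.strongInduction generalizing A v a with
  | H B ih =>
    subst hB
    have houtside : ∀ b ∈ N \ A, ψ v b = φ v b := by
      intro b hb
      have hbN : b ∈ N := (mem_sdiff.1 hb).1
      have hlt : N \ insert b A ⊂ N \ A := by
        rw [sdiff_insert]
        exact erase_ssubset hb
      rw [← hψ.apply_marginalGame hv hbN, ← hφ.apply_marginalGame hv hbN]
      exact ih _ hlt (marginalGame_empty v b) (hA.insert_marginalGame b)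
        (insert_subset hbN hAN) hbN rfl
    by_cases haA : a ∈ A
    · exact eq_of_sum_eq_sum_of_const hAN ((hψ.efficient v hv).trans (hφ.efficient v hv).symm)
        houtside haA (fun b hb => hψ.eq_of_isVetoSet hv hA hAN hb haA)
        (fun b hb => hφ.eq_of_isVetoSet hv hA hAN hb haA)
    · exact houtside a (mem_sdiff.2 ⟨ha, haA⟩)

theorem unique [IsAddTorsionFree G] (hψ : IsYoungValue N ψ) (hφ : IsYoungValue N φ)
    (hv : v ∅ = 0) (ha : a ∈ N) : ψ v a = φ v a :=
  hψ.unique_of_isVetoSet hφ hv (fun S hS => absurd (empty_subset S) hS) (empty_subset N) ha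

end IsYoungValue

end Uniqueness

theorem shapley_young_characterization_general {ι : Type*} [DecidableEq ι]
    (N : Finset ι) (ψ : (Finset ι → ℝ) → ι → ℝ) (hψ : IsYoungValue N ψ) :
    ∀ v : Finset ι → ℝ, v ∅ = 0 → ∀ a ∈ N, ψ v a = shapleyFeatureValue N v a :=
  fun _ hv _ ha => hψ.unique (isYoungValue_shapleyFeatureValue N) hv ha

/-- Young-type characterization: any value `ψ` satisfying
transferability/efficiency, symmetry, and strong monotonicity coincides with
the Shapley feature value. -/
theorem shapley_young_characterization {ι : Type*} [DecidableEq ι]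
    (N : Finset ι) (ψ : (Finset ι → ℝ) → ι → ℝ)
    (heff : ∀ v : Finset ι → ℝ, v ∅ = 0 → ∑ a ∈ N, ψ v a = v N)
    (hsym : ∀ v : Finset ι → ℝ, v ∅ = 0 → ∀ a ∈ N, ∀ b ∈ N,
      (∀ S ⊆ (N.erase a).erase b, v (insert a S) = v (insert b S)) →
        ψ v a = ψ v b)
    (hmono : ∀ v₁ v₂ : Finset ι → ℝ, v₁ ∅ = 0 → v₂ ∅ = 0 → ∀ a ∈ N,
      (∀ S ⊆ N.erase a,
        v₁ (insert a S) - v₁ S ≥ v₂ (insert a S) - v₂ S) →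
      ψ v₁ a ≥ ψ v₂ a) :
    ∀ v : Finset ι → ℝ, v ∅ = 0 → ∀ a ∈ N,
      ψ v a = shapleyFeatureValue N v a :=
  shapley_young_characterization_general N ψ ⟨heff, hsym, fun v₁ v₂ hv₁ hv₂ a ha h => le_antisymm
    (hmono v₂ v₁ hv₂ hv₁ a ha fun S hS => (h S hS).le)
    (hmono v₁ v₂ hv₁ hv₂ a ha fun S hS => (h S hS).ge)⟩
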